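/- Let d ≥ 1, l ∈ ℕ, α = (α₁,…,α_d) with 1 ≤ α₁ ≤ α₂ ≤ … ≤ α_d and l ≥ ⌊α_d⌋, and L = (L₁,…,L_d) ∈ (0,∞)^d. Let g : ℝ^d → ℝ belong to the anisotropic Hölder class H_d(α, L). Let u = (u_0,…,u_l) ∈ ℝ^{l+1} satisfy, for every k ∈ {0,…,l}, ∑_{i=0}^{l} u_i ( ∑_{j=0}^{k} (−1)^j m_j i^{k−j} / (j!(k−j)!) ) = 1 if k = 0 and = 0 otherwise, where m_j is the j-th moment of the standard real Gaussian, and for a multi-index γ = (γ₁,…,γ_d) ∈ {0,…,l}^d set u_γ = ∏_{i=1}^d u_{γ_i}. Then there exists a constant C > 0, depending only on d, l, α and L, such that for every x ∈ ℝ^d and every τ > 0: | ∑_{γ ∈ {0,…,l}^d} u_γ ∫_{ℝ^d} g(x + τ(γ − z)) dΓ(z) − g(x) | ≤ C ∑_{i=1}^{d} τ^{α_i}. -/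

import Mathlib

open MeasureTheory ProbabilityTheory

/-- The iterated partial derivative `∂_i^k g (x)` of `g : ℝ^d → ℝ` in the direction of
the `i`-th canonical basis vector, defined as the `k`-th derivative at `0` of
`t ↦ g (x + t e_i)`. -/
noncomputable def partialDerivIter (d : ℕ) (g : (Fin d → ℝ) → ℝ) (i : Fin d) (k : ℕ)
    (x : Fin d → ℝ) : ℝ :=
  iteratedDeriv k (fun t : ℝ => g (x + t • (Pi.single i 1 : Fin d → ℝ))) 0

/-- `g : ℝ^d → ℝ` belongs to the anisotropic Hölder class `H_d(α, L)`. -/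
def IsAnisotropicHolder (d : ℕ) (α L : Fin d → ℝ) (g : (Fin d → ℝ) → ℝ) : Prop :=
  ∀ i : Fin d,
    (∀ x : Fin d → ℝ, ∀ k < ⌊α i⌋₊,
        Differentiable ℝ (iteratedDeriv k (fun t : ℝ => g (x + t • (Pi.single i 1 : Fin d → ℝ))))) ∧
    (∀ k ≤ ⌊α i⌋₊, ∀ x : Fin d → ℝ, |partialDerivIter d g i k x| ≤ L i) ∧
    (∀ (t : ℝ) (x : Fin d → ℝ),
        |partialDerivIter d g i ⌊α i⌋₊ (x + t • (Pi.single i 1 : Fin d → ℝ)) -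
            partialDerivIter d g i ⌊α i⌋₊ x| ≤ L i * |t| ^ (α i - (⌊α i⌋₊ : ℝ)))


lemma taylor_aux (β : ℝ) (hβ : 0 ≤ β) (K : ℝ) (hK : 0 ≤ K) : ∀ (m : ℕ) (f : ℝ → ℝ),
    (∀ k < m, Differentiable ℝ (iteratedDeriv k f)) →
    (∀ t, |iteratedDeriv m f t - iteratedDeriv m f 0| ≤ K * |t| ^ β) →
    ∀ t, |f t - ∑ k ∈ Finset.range (m + 1), iteratedDeriv k f 0 * t ^ k / (k.factorial : ℝ)|
      ≤ K * |t| ^ ((m : ℝ) + β) := by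
  intro m
  induction m with
  | zero =>
    intro f _ h t
    simpa using h t
  | succ m ih =>
    intro f hd h t
    have hdf : Differentiable ℝ f := by simpa using hd 0 (by omega)
    have ih' := ih (deriv f) (fun k hk => by
      rw [← iteratedDeriv_succ']; exact hd (k + 1) (by omega)) (by
      rw [← iteratedDeriv_succ']; exact h)
    simp only [← iteratedDeriv_succ'] at ih'
    set R : ℝ → ℝ := fun t => f t -
      ∑ k ∈ Finset.range (m + 1 + 1), iteratedDeriv k f 0 * t ^ k / (k.factorial : ℝ) with hR
    have hR0 : R 0 = 0 := by
      simp only [hR]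
      rw [Finset.sum_range_succ']
      simp
    have hRd : ∀ r, HasDerivAt R (deriv f r -
        ∑ k ∈ Finset.range (m + 1), iteratedDeriv (k + 1) f 0 * r ^ k / (k.factorial : ℝ)) r := by
      intro r
      refine (hdf r).hasDerivAt.sub ?_
      have : (fun r : ℝ => ∑ k ∈ Finset.range (m + 1 + 1),
          iteratedDeriv k f 0 * r ^ k / (k.factorial : ℝ)) = fun r =>
          (∑ k ∈ Finset.range (m + 1),
          iteratedDeriv (k + 1) f 0 * r ^ (k + 1) / ((k + 1).factorial : ℝ)) + f 0 := by
        funext r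
        rw [Finset.sum_range_succ']
        simp
      rw [this]
      refine HasDerivAt.add_const _ ?_
      refine HasDerivAt.fun_sum fun k _ => ?_
      have h1 := ((hasDerivAt_pow (k + 1) r).const_mul (iteratedDeriv (k + 1) f 0)).div_const
        ((k + 1).factorial : ℝ)
      refine h1.congr_deriv ?_
      rw [Nat.factorial_succ]
      have : (k.factorial : ℝ) ≠ 0 := by positivity
      push_cast
      field_simp
    have key := Convex.norm_image_sub_le_of_norm_hasDerivWithin_le (f := R)
      (s := Set.uIcc 0 t) (x := 0) (y := t) (C := K * |t| ^ ((m : ℝ) + β))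
      (fun r _ => (hRd r).hasDerivWithinAt) (fun r hr => by
        refine (ih' r).trans ?_
        have hrt : |r| ≤ |t| := by
          have := Set.abs_sub_left_of_mem_uIcc hr
          simpa using this
        gcongr) (convex_uIcc 0 t) Set.left_mem_uIcc Set.right_mem_uIcc
    rw [hR0] at key
    simp only [sub_zero, Real.norm_eq_abs] at key
    refine key.trans (le_of_eq ?_)
    push_cast
    rw [show (m : ℝ) + 1 + β = ((m : ℝ) + β) + 1 by ring, Real.rpow_add_one' (abs_nonneg _) (by positivity)]
    ring

lemma uniq_aux (l : ℕ) (w : Fin (l + 1) → ℝ)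
    (h : ∀ k : Fin (l + 1),
          (∑ i : Fin (l + 1), w i *
            ∑ j ∈ Finset.range (k.val + 1),
              (-1 : ℝ) ^ j * (∫ z : ℝ, z ^ j ∂(gaussianReal 0 1)) * (i.val : ℝ) ^ (k.val - j) /
                ((Nat.factorial j : ℝ) * (Nat.factorial (k.val - j) : ℝ))) = 0) : w = 0 := by
  have hS : ∀ k, k < l + 1 → ∑ i : Fin (l + 1), w i * (i.val : ℝ) ^ k = 0 := by
    intro k
    induction k using Nat.strong_induction_on with
    | _ k ih =>
      intro hk
      have h1 := h ⟨k, hk⟩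
      simp only [Finset.mul_sum] at h1
      rw [Finset.sum_comm, Finset.sum_range_succ'] at h1
      rw [Finset.sum_eq_zero, zero_add] at h1
      · have : ∑ i : Fin (l + 1), w i * (i.val : ℝ) ^ k =
          (k.factorial : ℝ) * ∑ i : Fin (l + 1), w i * ((-1 : ℝ) ^ 0 *
            (∫ z : ℝ, z ^ 0 ∂(gaussianReal 0 1)) * (i.val : ℝ) ^ (k - 0) /
                ((Nat.factorial 0 : ℝ) * (Nat.factorial (k - 0) : ℝ))) := by
          rw [Finset.mul_sum]
          refine Finset.sum_congr rfl fun i _ => ?_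
          have : (k.factorial : ℝ) ≠ 0 := by positivity
          simp
          field_simp
        rw [this, h1, mul_zero]
      · intro j hj
        rw [Finset.mem_range] at hj
        have h2 := ih (k - (j + 1)) (by omega) (by omega)
        calc _ = ((-1 : ℝ) ^ (j + 1) * (∫ z : ℝ, z ^ (j + 1) ∂(gaussianReal 0 1)) /
              ((Nat.factorial (j + 1) : ℝ) * (Nat.factorial (k - (j + 1)) : ℝ))) *
              ∑ i : Fin (l + 1), w i * (i.val : ℝ) ^ (k - (j + 1)) := by
              rw [Finset.mul_sum]
              refine Finset.sum_congr rfl fun i _ => ?_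
              ring
          _ = 0 := by rw [h2, mul_zero]
  refine Matrix.eq_zero_of_forall_pow_sum_mul_pow_eq_zero
    (f := fun i : Fin (l + 1) => (i.val : ℝ)) ?_ fun k => hS k.val k.isLt
  intro a b hab
  have hab' : (a.val : ℝ) = (b.val : ℝ) := hab
  exact Fin.ext (by exact_mod_cast hab')

lemma int_pow (a : ℝ) (k : ℕ) : Integrable (fun z : ℝ => (a - z) ^ k) (gaussianReal 0 1) := by
  have hm : MemLp (fun z : ℝ => a - z) k (gaussianReal 0 1) :=
    (memLp_const a).sub (memLp_id_gaussianReal' k (by simp))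
  rcases Nat.eq_zero_or_pos k with rfl | hk
  · simp
  · have := hm.integrable_norm_pow hk.ne'
    refine this.mono (by fun_prop) (by simp)

lemma int_rpow (a p : ℝ) (hp : 0 < p) :
    Integrable (fun z : ℝ => |a - z| ^ p) (gaussianReal 0 1) := by
  have hm : MemLp (fun z : ℝ => a - z) (ENNReal.ofReal p) (gaussianReal 0 1) :=
    (memLp_const a).sub (memLp_id_gaussianReal' _ (by simp))
  have := hm.integrable_norm_rpow (by simpa using hp) (by simp)
  simpa [ENNReal.toReal_ofReal hp.le] using this

lemma moment_aux (a : ℝ) (k : ℕ) :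
    ∑ j ∈ Finset.range (k + 1),
      (-1 : ℝ) ^ j * (∫ z : ℝ, z ^ j ∂(gaussianReal 0 1)) * a ^ (k - j) /
        ((Nat.factorial j : ℝ) * (Nat.factorial (k - j) : ℝ)) =
      (∫ z : ℝ, (a - z) ^ k ∂(gaussianReal 0 1)) / (k.factorial : ℝ) := by
  have h1 : ∀ z : ℝ, (a - z) ^ k = ∑ j ∈ Finset.range (k + 1),
      ((-1 : ℝ) ^ j * a ^ (k - j) * (k.choose j : ℝ)) * z ^ j := by
    intro z
    rw [sub_eq_neg_add, add_pow]
    refine Finset.sum_congr rfl fun j _ => ?_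
    rw [neg_pow]
    ring
  simp only [h1]
  rw [integral_finsetSum]
  · rw [Finset.sum_div]
    refine Finset.sum_congr rfl fun j hj => ?_
    rw [integral_const_mul]
    rw [Finset.mem_range] at hj
    rw [Nat.cast_choose ℝ (show j ≤ k by omega)]
    have : (k.factorial : ℝ) ≠ 0 := by positivity
    field_simp
  · intro j _
    refine Integrable.const_mul ?_ _
    have := (int_pow 0 j)
    refine this.mono (by fun_prop) (by simp)

lemma pi_split {d : ℕ} (μ : Measure ℝ) [IsProbabilityMeasure μ] (F : (Fin (d + 1) → ℝ) → ℝ)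
    (hF : Integrable (fun p : ℝ × (Fin d → ℝ) => F (Fin.cons p.1 p.2))
      (μ.prod (Measure.pi fun _ : Fin d => μ))) :
    ∫ z, F z ∂(Measure.pi fun _ : Fin (d + 1) => μ) =
      ∫ a, ∫ z, F (Fin.cons a z) ∂(Measure.pi fun _ : Fin d => μ) ∂μ := by
  have h := (measurePreserving_piFinSuccAbove (fun _ : Fin (d + 1) => μ) 0).integral_comp'
    (fun p : ℝ × (Fin d → ℝ) => F (Fin.cons p.1 p.2))
  rw [← integral_prod (fun p : ℝ × (Fin d → ℝ) => F (Fin.cons p.1 p.2)) hF]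
  refine Eq.trans ?_ h
  refine integral_congr_ae (Filter.Eventually.of_forall fun z => ?_)
  simp [MeasurableEquiv.piFinSuccAbove, Fin.insertNthEquiv]

lemma int_bdd {X : Type*} [TopologicalSpace X] [MeasurableSpace X] [BorelSpace X]
    (μ : Measure X) [IsProbabilityMeasure μ] (f : X → ℝ) (hf : Continuous f) (M : ℝ)
    (hM : ∀ x, |f x| ≤ M) : Integrable f μ :=
  Integrable.of_bound hf.measurable.aestronglyMeasurable M
    (Filter.Eventually.of_forall (by simpa using hM))

lemma tele (n : ℕ) (u : Fin n → ℝ) (hu : 1 ≤ ∑ j, |u j|) (μ : Measure ℝ)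
    [IsProbabilityMeasure μ] (τ M : ℝ) : ∀ (d : ℕ) (g : (Fin d → ℝ) → ℝ) (hg : Continuous g)
    (hM : ∀ x, |g x| ≤ M) (B : Fin d → ℝ)
    (hB : ∀ i x, |∑ j : Fin n, u j *
      ∫ z, g (Function.update x i (x i + τ * ((j.val : ℝ) - z))) ∂μ - g x| ≤ B i)
    (x : Fin d → ℝ),
    |(∑ γ : Fin d → Fin n, (∏ i : Fin d, u (γ i)) *
              ∫ z : Fin d → ℝ, g (fun i => x i + τ * (((γ i).val : ℝ) - z i))
                ∂(Measure.pi fun _ : Fin d => μ)) - g x| ≤ (∑ j, |u j|) ^ d * ∑ i, B i := by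
  intro d
  induction d with
  | zero =>
    intro g hg hM B hB x
    have : ∀ y, g y = g x := fun y => by rw [Subsingleton.elim y x]
    simp [this]
  | succ d ih =>
    intro g hg hM B hB x
    set U := ∑ j, |u j| with hU
    set x' : Fin d → ℝ := fun i => x i.succ with hx'
    set G : ℝ → ℝ := fun a => ∑ γ : Fin d → Fin n, (∏ i : Fin d, u (γ i)) *
              ∫ z : Fin d → ℝ, g (Fin.cons a (fun i => x' i + τ * (((γ i).val : ℝ) - z i)))
                ∂(Measure.pi fun _ : Fin d => μ) with hG
    have hcons : Continuous (fun p : ℝ × (Fin d → ℝ) => (Fin.cons p.1 p.2 : Fin (d + 1) → ℝ)) := by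
      refine continuous_pi fun i => ?_
      refine Fin.cases ?_ (fun i => ?_) i
      · simpa using continuous_fst
      · simp only [Fin.cons_succ]; fun_prop
    have hGb : ∀ a, |G a - g (Fin.cons a x')| ≤ U ^ d * ∑ i : Fin d, B i.succ := by
      intro a
      refine ih (fun y => g (Fin.cons a y)) (hg.comp (hcons.comp (by fun_prop : Continuous fun y : Fin d → ℝ => (a, y))))
        (fun y => hM _) (fun i => B i.succ) (fun i y => ?_) x'
      have := hB i.succ (Fin.cons a y)
      simpa [Fin.cons_update] using this
    have hint : ∀ (j : Fin n) (γ : Fin d → Fin n), Integrable (fun p : ℝ × (Fin d → ℝ) =>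
        g (Fin.cons (x 0 + τ * ((j.val : ℝ) - p.1))
          (fun i => x' i + τ * (((γ i).val : ℝ) - p.2 i)))) (μ.prod (Measure.pi fun _ : Fin d => μ)) := by
      intro j γ
      refine int_bdd _ _ ?_ M (fun _ => hM _)
      exact hg.comp (hcons.comp (by fun_prop : Continuous fun p : ℝ × (Fin d → ℝ) =>
        ((x 0 + τ * ((j.val : ℝ) - p.1)), (fun i => x' i + τ * (((γ i).val : ℝ) - p.2 i)))))
    have hGi : ∀ j : Fin n, Integrable (fun z => G (x 0 + τ * ((j.val : ℝ) - z))) μ := by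
      intro j
      refine integrable_finsetSum _ fun γ _ => Integrable.const_mul ?_ _
      exact (hint j γ).integral_prod_left
    have hmain : (∑ γ : Fin (d + 1) → Fin n, (∏ i, u (γ i)) *
              ∫ z : Fin (d + 1) → ℝ, g (fun i => x i + τ * (((γ i).val : ℝ) - z i))
                ∂(Measure.pi fun _ : Fin (d + 1) => μ)) =
        ∑ j : Fin n, u j * ∫ z, G (x 0 + τ * ((j.val : ℝ) - z)) ∂μ := by
      rw [← (Fin.consEquiv (fun _ : Fin (d + 1) => Fin n)).sum_comp, Fintype.sum_prod_type]
      refine Finset.sum_congr rfl fun j _ => ?_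
      simp only [hG]
      rw [integral_finsetSum, Finset.mul_sum]
      · refine Finset.sum_congr rfl fun γ _ => ?_
        rw [integral_const_mul, Fin.prod_univ_succ]
        simp only [Fin.consEquiv_apply, Fin.cons_zero, Fin.cons_succ]
        rw [mul_assoc]
        congr 2
        have hc : ∀ (a : ℝ) (z : Fin d → ℝ), (fun i : Fin (d + 1) => x i + τ *
            ((((Fin.cons j γ : Fin (d + 1) → Fin n) i).val : ℝ) - (Fin.cons a z : Fin (d + 1) → ℝ) i)) =
            Fin.cons (x 0 + τ * ((j.val : ℝ) - a))
              (fun i => x' i + τ * (((γ i).val : ℝ) - z i)) := by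
          intro a z
          funext i
          refine Fin.cases ?_ (fun i => ?_) i <;> simp [hx']
        rw [pi_split]
        · simp only [hc]
        · simp only [hc]
          exact hint j γ
      · intro γ _
        exact Integrable.const_mul (hint j γ).integral_prod_left _
    have hx : (Fin.cons (x 0) x' : Fin (d + 1) → ℝ) = x := Fin.cons_self_tail x
    have hupd : ∀ a, Function.update x 0 a = Fin.cons a x' := by
      intro a
      rw [← hx, Fin.update_cons_zero]
    have h0 := hB 0 x
    simp only [hupd] at h0
    have hgi : ∀ j : Fin n, Integrable (fun z => g (Fin.cons (x 0 + τ * ((j.val : ℝ) - z)) x')) μ := by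
      intro j
      refine int_bdd _ _ ?_ M (fun _ => hM _)
      exact hg.comp (hcons.comp (by fun_prop : Continuous fun z : ℝ =>
        ((x 0 + τ * ((j.val : ℝ) - z)), x')))
    rw [hmain, Fin.sum_univ_succ]
    set D := U ^ d * ∑ i : Fin d, B i.succ with hD
    have hdiff : |∑ j : Fin n, u j * ∫ z, G (x 0 + τ * ((j.val : ℝ) - z)) ∂μ -
        ∑ j : Fin n, u j * ∫ z, g (Fin.cons (x 0 + τ * ((j.val : ℝ) - z)) x') ∂μ| ≤ U * D := by
      rw [← Finset.sum_sub_distrib, hU, Finset.sum_mul]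
      refine (Finset.abs_sum_le_sum_abs _ _).trans (Finset.sum_le_sum fun j _ => ?_)
      rw [← mul_sub, abs_mul, ← integral_sub (hGi j) (hgi j)]
      refine mul_le_mul_of_nonneg_left ?_ (abs_nonneg _)
      have := norm_integral_le_of_norm_le_const (μ := μ) (C := D)
        (f := fun z => G (x 0 + τ * ((j.val : ℝ) - z)) - g (Fin.cons (x 0 + τ * ((j.val : ℝ) - z)) x'))
        (Filter.Eventually.of_forall fun z => by simpa using hGb _)
      simpa using this
    have hB0 : 0 ≤ B 0 := (abs_nonneg _).trans h0
    have hU1 : B 0 ≤ U ^ (d + 1) * B 0 := le_mul_of_one_le_left hB0 (one_le_pow₀ hu)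
    calc _ ≤ U * D + B 0 := (abs_sub_le _ _ _).trans (add_le_add hdiff h0)
      _ ≤ U * D + U ^ (d + 1) * B 0 := by linarith
      _ = _ := by rw [hD]; ring

lemma oneD (l m : ℕ) (hml : m ≤ l) (α : ℝ) (hmα : (m : ℝ) ≤ α) (hα : 0 < α) (K M : ℝ) (hK : 0 ≤ K)
    (f : ℝ → ℝ) (hf : Continuous f) (hM : ∀ t, |f t| ≤ M)
    (hd : ∀ k < m, Differentiable ℝ (iteratedDeriv k f))
    (hh : ∀ t, |iteratedDeriv m f t - iteratedDeriv m f 0| ≤ K * |t| ^ (α - m))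
    (u : Fin (l + 1) → ℝ)
    (hu : ∀ k : Fin (l + 1),
          (∑ i : Fin (l + 1), u i *
            ∑ j ∈ Finset.range (k.val + 1),
              (-1 : ℝ) ^ j * (∫ z : ℝ, z ^ j ∂(gaussianReal 0 1)) * (i.val : ℝ) ^ (k.val - j) /
                ((Nat.factorial j : ℝ) * (Nat.factorial (k.val - j) : ℝ))) =
          if k.val = 0 then 1 else 0)
    (τ : ℝ) (hτ : 0 < τ) :
    |∑ j : Fin (l + 1), u j * ∫ z, f (τ * ((j.val : ℝ) - z)) ∂(gaussianReal 0 1) - f 0| ≤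
      K * (∑ j : Fin (l + 1), |u j| * ∫ z, |(j.val : ℝ) - z| ^ α ∂(gaussianReal 0 1)) * τ ^ α := by
  have hT := taylor_aux (α - m) (by linarith) K hK m f hd hh
  simp only [add_sub_cancel] at hT
  set P : ℝ → ℝ := fun t => ∑ k ∈ Finset.range (m + 1), iteratedDeriv k f 0 * t ^ k / (k.factorial : ℝ)
    with hP
  have hPe : ∀ (j : Fin (l + 1)) (z : ℝ), P (τ * ((j.val : ℝ) - z)) =
      ∑ k ∈ Finset.range (m + 1), (iteratedDeriv k f 0 * τ ^ k / (k.factorial : ℝ)) *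
        ((j.val : ℝ) - z) ^ k := by
    intro j z
    refine Finset.sum_congr rfl fun k _ => ?_
    rw [mul_pow]; ring
  have hPi : ∀ j : Fin (l + 1), Integrable (fun z => P (τ * ((j.val : ℝ) - z))) (gaussianReal 0 1) := by
    intro j
    simp only [hPe]
    exact integrable_finsetSum _ fun k _ => (int_pow _ k).const_mul _
  have hfi : ∀ j : Fin (l + 1), Integrable (fun z => f (τ * ((j.val : ℝ) - z))) (gaussianReal 0 1) := by
    intro j
    exact int_bdd _ _ (hf.comp (by fun_prop)) M fun _ => hM _
  have hPint : ∑ j : Fin (l + 1), u j * ∫ z, P (τ * ((j.val : ℝ) - z)) ∂(gaussianReal 0 1) = f 0 := by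
    have h1 : ∀ j : Fin (l + 1), u j * ∫ z, P (τ * ((j.val : ℝ) - z)) ∂(gaussianReal 0 1) =
        ∑ k ∈ Finset.range (m + 1), (iteratedDeriv k f 0 * τ ^ k) *
          (u j * ((∫ z, ((j.val : ℝ) - z) ^ k ∂(gaussianReal 0 1)) / (k.factorial : ℝ))) := by
      intro j
      simp only [hPe]
      rw [integral_finsetSum _ fun k _ => (int_pow _ k).const_mul _, Finset.mul_sum]
      refine Finset.sum_congr rfl fun k _ => ?_
      rw [integral_const_mul]; ring
    simp only [h1]
    rw [Finset.sum_comm]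
    have h2 : ∀ k ∈ Finset.range (m + 1), ∑ j : Fin (l + 1), (iteratedDeriv k f 0 * τ ^ k) *
          (u j * ((∫ z, ((j.val : ℝ) - z) ^ k ∂(gaussianReal 0 1)) / (k.factorial : ℝ))) =
          (iteratedDeriv k f 0 * τ ^ k) * if k = 0 then 1 else 0 := by
      intro k hk
      rw [Finset.mem_range] at hk
      have h3 := hu ⟨k, by omega⟩
      simp only [moment_aux] at h3
      rw [← Finset.mul_sum, h3]
    rw [Finset.sum_congr rfl h2]
    simp
  calc _ = |∑ j : Fin (l + 1), u j * ∫ z, (f (τ * ((j.val : ℝ) - z)) - P (τ * ((j.val : ℝ) - z)))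
        ∂(gaussianReal 0 1)| := by
        rw [← hPint, ← Finset.sum_sub_distrib]
        congr 1
        refine Finset.sum_congr rfl fun j _ => ?_
        rw [integral_sub (hfi j) (hPi j), mul_sub]
    _ ≤ ∑ j : Fin (l + 1), |u j| * (K * τ ^ α * ∫ z, |(j.val : ℝ) - z| ^ α ∂(gaussianReal 0 1)) := by
        refine (Finset.abs_sum_le_sum_abs _ _).trans (Finset.sum_le_sum fun j _ => ?_)
        rw [abs_mul]
        refine mul_le_mul_of_nonneg_left ?_ (abs_nonneg _)
        rw [← integral_const_mul, ← Real.norm_eq_abs]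
        refine norm_integral_le_of_norm_le ((int_rpow _ _ hα).const_mul _)
          (Filter.Eventually.of_forall fun z => ?_)
        refine (hT _).trans (le_of_eq ?_)
        rw [abs_mul, abs_of_pos hτ, Real.mul_rpow hτ.le (abs_nonneg _)]
        ring
    _ = _ := by
        rw [Finset.mul_sum, Finset.sum_mul]
        refine Finset.sum_congr rfl fun j _ => ?_
        ring

lemma pd_shift (d : ℕ) (g : (Fin d → ℝ) → ℝ) (i : Fin d) (k : ℕ) (x : Fin d → ℝ) (t : ℝ) :
    partialDerivIter d g i k (x + t • (Pi.single i 1 : Fin d → ℝ)) =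
      iteratedDeriv k (fun s : ℝ => g (x + s • (Pi.single i 1 : Fin d → ℝ))) t := by
  have h := congrFun (iteratedDeriv_comp_const_add k
    (fun s : ℝ => g (x + s • (Pi.single i 1 : Fin d → ℝ))) t) 0
  rw [add_zero] at h
  rw [← h, partialDerivIter]
  simp only [add_smul, add_assoc]

lemma upd_eq (d : ℕ) (i : Fin d) (x : Fin d → ℝ) (t : ℝ) :
    Function.update x i (x i + t) = x + t • (Pi.single i 1 : Fin d → ℝ) := by
  funext j
  by_cases h : j = i
  · subst h; simp
  · simp [h]

lemma holder_cont (d : ℕ) (α L : Fin d → ℝ) (hα1 : ∀ i, 1 ≤ α i) (hL : ∀ i, 0 < L i)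
    (g : (Fin d → ℝ) → ℝ) (hg : IsAnisotropicHolder d α L g) : Continuous g := by
  have hfl : ∀ i, 1 ≤ ⌊α i⌋₊ := fun i => by
    rw [Nat.one_le_floor_iff]; exact hα1 i
  have h1 : ∀ i x t, |g (x + t • (Pi.single i 1 : Fin d → ℝ)) - g x| ≤ L i * |t| := by
    intro i x t
    obtain ⟨hd, hb, -⟩ := hg i
    have hdf := hd x 0 (hfl i)
    rw [iteratedDeriv_zero] at hdf
    have := Convex.norm_image_sub_le_of_norm_deriv_le
      (f := fun s : ℝ => g (x + s • (Pi.single i 1 : Fin d → ℝ))) (s := Set.univ) (x := 0) (y := t)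
      (C := L i) (fun r _ => hdf r) (fun r _ => by
        have := hb 1 (hfl i) (x + r • (Pi.single i 1 : Fin d → ℝ))
        rw [pd_shift, iteratedDeriv_one] at this
        exact this) convex_univ trivial trivial
    simpa using this
  have h2 : ∀ (x y : Fin d → ℝ) (s : Finset (Fin d)),
      |g (s.piecewise y x) - g x| ≤ ∑ i ∈ s, L i * |y i - x i| := by
    intro x y s
    induction s using Finset.induction_on with
    | empty => simp
    | insert j s hj ih =>
      rw [Finset.piecewise_insert, Finset.sum_insert hj]
      have h3 := h1 j (s.piecewise y x) (y j - x j)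
      rw [← upd_eq, Finset.piecewise_eq_of_notMem _ _ _ hj, add_sub_cancel] at h3
      exact (abs_sub_le _ _ _).trans (add_le_add h3 ih)
  rw [continuous_iff_continuousAt]
  intro x
  rw [ContinuousAt, tendsto_iff_dist_tendsto_zero]
  have h4 : Filter.Tendsto (fun y : Fin d → ℝ => ∑ i, L i * |y i - x i|) (nhds x) (nhds 0) := by
    have : Continuous (fun y : Fin d → ℝ => ∑ i, L i * |y i - x i|) := by fun_prop
    have h5 := this.tendsto x
    simpa using h5
  refine squeeze_zero (fun _ => dist_nonneg) (fun y => ?_) h4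
  have := h2 x y Finset.univ
  simpa [Real.dist_eq] using this

lemma fixed_u (d l : ℕ) (hd : 1 ≤ d) (α L : Fin d → ℝ)
    (hα1 : ∀ i, 1 ≤ α i) (hl : ∀ i, ⌊α i⌋₊ ≤ l) (hL : ∀ i, 0 < L i) (u : Fin (l + 1) → ℝ)
    (hu : ∀ k : Fin (l + 1),
          (∑ i : Fin (l + 1), u i *
            ∑ j ∈ Finset.range (k.val + 1),
              (-1 : ℝ) ^ j * (∫ z : ℝ, z ^ j ∂(gaussianReal 0 1)) * (i.val : ℝ) ^ (k.val - j) /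
                ((Nat.factorial j : ℝ) * (Nat.factorial (k.val - j) : ℝ))) =
          if k.val = 0 then 1 else 0) :
    ∃ C > 0, ∀ g : (Fin d → ℝ) → ℝ, IsAnisotropicHolder d α L g →
        ∀ (x : Fin d → ℝ) (τ : ℝ), 0 < τ →
          |(∑ γ : Fin d → Fin (l + 1), (∏ i : Fin d, u (γ i)) *
              ∫ z : Fin d → ℝ, g (fun i => x i + τ * (((γ i).val : ℝ) - z i))
                ∂(Measure.pi fun _ : Fin d => gaussianReal 0 1)) - g x| ≤
            C * ∑ i : Fin d, τ ^ α i := by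
  have hsum : ∑ i, u i = 1 := by
    have := hu 0
    simpa using this
  have hU : 1 ≤ ∑ i, |u i| := by
    rw [← abs_one, ← hsum]
    exact Finset.abs_sum_le_sum_abs _ _
  set W : Fin d → ℝ := fun i => L i *
    (∑ j : Fin (l + 1), |u j| * ∫ z, |(j.val : ℝ) - z| ^ (α i) ∂(gaussianReal 0 1)) with hW
  have hW0 : ∀ i, 0 ≤ W i := by
    intro i
    refine mul_nonneg (hL i).le (Finset.sum_nonneg fun j _ => mul_nonneg (abs_nonneg _) ?_)
    exact integral_nonneg fun z => by positivity
  have hWs : 0 ≤ ∑ i, W i := Finset.sum_nonneg fun i _ => hW0 i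
  refine ⟨(∑ j, |u j|) ^ d * ∑ i, W i + 1, by positivity, ?_⟩
  intro g hg x τ hτ
  have hc := holder_cont d α L hα1 hL g hg
  have hM : ∀ x, |g x| ≤ L ⟨0, hd⟩ := by
    intro x
    have := (hg ⟨0, hd⟩).2.1 0 (Nat.zero_le _) x
    simpa [partialDerivIter] using this
  have key := tele (l + 1) u hU (gaussianReal 0 1) τ _ d g hc hM (fun i => W i * τ ^ α i)
    (fun i y => by
      obtain ⟨h1, -, h3⟩ := hg i
      have := oneD l ⌊α i⌋₊ (hl i) (α i) (Nat.floor_le (by linarith [hα1 i])) (by linarith [hα1 i])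
        (L i) _ (hL i).le (fun t : ℝ => g (y + t • (Pi.single i 1 : Fin d → ℝ)))
        (hc.comp (by fun_prop)) (fun t => hM _) (h1 y) (fun t => by
          have := h3 t y
          rw [pd_shift] at this
          exact this) u hu τ hτ
      simp only [upd_eq]
      simpa only [zero_smul, add_zero] using this) x
  refine key.trans ?_
  have hτ0 : 0 ≤ ∑ i, τ ^ α i := Finset.sum_nonneg fun i _ => by positivity
  have h5 : ∑ i, W i * τ ^ α i ≤ (∑ i, W i) * ∑ i, τ ^ α i := by
    rw [Finset.sum_mul]
    refine Finset.sum_le_sum fun i _ => mul_le_mul_of_nonneg_left ?_ (hW0 i)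
    exact Finset.single_le_sum (f := fun i => τ ^ α i) (fun j _ => by positivity) (Finset.mem_univ i)
  have h6 : 0 ≤ (∑ j, |u j|) ^ d := by positivity
  nlinarith [mul_le_mul_of_nonneg_left h5 h6]

/-- multivariate debiasing bound. For `g` in the anisotropic Hölder
class and `u` solving the Gaussian moment system, the debiased Gaussian smoothing of
`g` approximates `g` at rate `∑ τ^{α_i}`, with a constant depending only on
`d, l, α, L`. -/
theorem stmt_10 (d l : ℕ) (hd : 1 ≤ d) (α L : Fin d → ℝ)
    (hα1 : ∀ i, 1 ≤ α i) (hmono : ∀ i j : Fin d, i ≤ j → α i ≤ α j)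
    (hl : ∀ i, ⌊α i⌋₊ ≤ l) (hL : ∀ i, 0 < L i) :
    ∃ C > 0, ∀ g : (Fin d → ℝ) → ℝ, IsAnisotropicHolder d α L g →
      ∀ u : Fin (l + 1) → ℝ,
        (∀ k : Fin (l + 1),
          (∑ i : Fin (l + 1), u i *
            ∑ j ∈ Finset.range (k.val + 1),
              (-1 : ℝ) ^ j * (∫ z : ℝ, z ^ j ∂(gaussianReal 0 1)) * (i.val : ℝ) ^ (k.val - j) /
                ((Nat.factorial j : ℝ) * (Nat.factorial (k.val - j) : ℝ))) =
          if k.val = 0 then 1 else 0) →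
        ∀ (x : Fin d → ℝ) (τ : ℝ), 0 < τ →
          |(∑ γ : Fin d → Fin (l + 1), (∏ i : Fin d, u (γ i)) *
              ∫ z : Fin d → ℝ, g (fun i => x i + τ * (((γ i).val : ℝ) - z i))
                ∂(Measure.pi fun _ : Fin d => gaussianReal 0 1)) - g x| ≤
            C * ∑ i : Fin d, τ ^ α i := by
  by_cases hex : ∃ u : Fin (l + 1) → ℝ, ∀ k : Fin (l + 1),
          (∑ i : Fin (l + 1), u i *
            ∑ j ∈ Finset.range (k.val + 1),
              (-1 : ℝ) ^ j * (∫ z : ℝ, z ^ j ∂(gaussianReal 0 1)) * (i.val : ℝ) ^ (k.val - j) /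
                ((Nat.factorial j : ℝ) * (Nat.factorial (k.val - j) : ℝ))) =
          if k.val = 0 then 1 else 0
  · obtain ⟨v, hv⟩ := hex
    obtain ⟨C, hC, h⟩ := fixed_u d l hd α L hα1 hl hL v hv
    refine ⟨C, hC, fun g hg u hu x τ hτ => ?_⟩
    have huv : u - v = 0 := uniq_aux l (u - v) fun k => by
      simp only [Pi.sub_apply, sub_mul, Finset.sum_sub_distrib]
      rw [hu k, hv k, sub_self]
    rw [sub_eq_zero.mp huv]
    exact h g hg x τ hτ
  · exact ⟨1, one_pos, fun g hg u hu => absurd ⟨u, hu⟩ hex⟩
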